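/- Let U ⊆ ℝⁿ be open, let g̃_{μν} : U → ℝ be smooth, symmetric and pointwise invertible with smooth inverse g̃^{μν}, let A_{iμ} : U → ℝ be smooth (i ∈ {1,2,3}), and let h > 0 be constant. Define Γ̃^σ_{μν} := (1/2) g̃^{σρ}(∂_μ g̃_{νρ} + ∂_ν g̃_{μρ} − ∂_ρ g̃_{μν}), F^μ_{βi} := (1/2) g̃^{αμ}(∂_α A_{βi} − ∂_β A_{αi} − (1/h) ε_{ijk} A_{jα} A_{kβ}), Γ^σ_{μν} := Γ̃^σ_{μν} − (1/h)(A_{μi} F^σ_{νi} + A_{νi} F^σ_{μi}), h̃^{ij} := (1/h) δ^{ij} + (1/h²) g̃^{μν} A_{iν} A_{jμ}, and let ∇ denote the covariant derivative determined by Γ acting on all Greek indices in the standard way (e.g. ∇_α T_β = ∂_α T_β − Γ^μ_{αβ} T_μ, ∇_μ F^μ_{βi} = ∂_μ F^μ_{βi} + Γ^μ_{μν} F^ν_{βi} − Γ^ν_{μβ} F^μ_{νi}, ∇_α A_{μi} = ∂_α A_{μi} − Γ^ν_{αμ} A_{νi}). Define R := −(1/4) h̃^{ii} + (1/2) g̃^{αβ}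 ( −∂_μ Γ^μ_{αβ} + ∂_α Γ^μ_{μβ} + Γ^μ_{αν} Γ^ν_{μβ} − Γ^μ_{μν} Γ^ν_{αβ} + (1/h) ∇_α (A_{iμ} F^μ_{iβ}) + (1/h²) A_{jμ} A_{iν} F^μ_{iα} F^ν_{jβ} − (2/h) A_{αi} ∇_μ F^μ_{βi} + (2/h²) A_{iβ} A_{νj} ( F^μ_{αj} F^ν_{μi} − F^μ_{αi} F^ν_{μj} ) + (1/h²) A_{iμ} A_{kα} F^μ_{βj} ε_{ijk} − (1/h) ( ∇_α A_{μi} + ∇_μ A_{αi} ) F^μ_{βi} + (1/(2h²)) A_{αi} A_{βi} ) + (1/2) h̃^{ij} F^μ_{νi} F^ν_{μj}, where F^μ_{iβ} := F^μ_{βi}. Then R = R̃_M − 3/(4h) + (1/(8h)) F^i_{αβ} F^{iαβ}, where R̃_M := (1/2) g̃^{αβ}( −∂_μ Γ̃^μ_{αβ} + ∂_α Γ̃^μ_{μβ} + Γ̃^μ_{αν} Γ̃^ν_{μβ} − Γ̃^μ_{μν} Γ̃^ν_{αβ} ), F^i_{αβ} := ∂_α A_{βi} − ∂_β A_{αi}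 − (1/h) ε_{ijk} A_{αj} A_{βk}, and F^{iαβ} := g̃^{αμ} g̃^{βν} F^i_{μν}. -/

import Mathlib

noncomputable section

/-- The totally antisymmetric Levi-Civita symbol on three indices with ε₀₁₂ = 1
(indices written 1,2,3 in the paper). -/
def eps (i j k : Fin 3) : ℝ :=
  ((((i : ℤ) - (j : ℤ)) * ((j : ℤ) - (k : ℤ)) * ((k : ℤ) - (i : ℤ))) / 2 : ℤ)

/-- The partial derivative `∂_μ f` of a function on `ℝⁿ`. -/
def pd {n : ℕ} {W : Type*} [NormedAddCommGroup W] [NormedSpace ℝ W]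
    (μ : Fin n) (f : (Fin n → ℝ) → W) : (Fin n → ℝ) → W :=
  fun x => fderiv ℝ f x (Pi.single μ 1)

/-!
With `c = 1/h`, write `Γ = Γ̃ - c S`, where `S` is the symmetrised product of the potential `A`
with the curvature `F`. Palatini's identity expresses `Ric(Γ) - Ric(Γ̃)` through the covariant
derivatives `∇_μ S^μ_{αβ}`, `∇_α S^μ_{μβ}` and a term quadratic in `S`. As `F` is trace-free, the
second of them is cancelled by `∇_α (A_{iμ} F^μ_{iβ})`, while the Leibniz rule turns the first,
after symmetrisation, into `2 (∇_μ A_{αi}) F^μ_{βi} + 2 A_{αi} ∇_μ F^μ_{βi}`. Since `Γ` is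
torsion-free, only the exterior derivative of `A` survives, and the structure constants complete it
to the Yang-Mills curvature. What is left of the terms quadratic in `A` cancels against the
`A`-dependent part of `h̃`.
-/

open Finset

section Sums

variable {ι κ τ : Type*} [Fintype ι] [Fintype κ] [Fintype τ]

theorem sum_sum_mul_eq_of_symm {G X Y : ι → ι → ℝ} (hG : ∀ α β, G α β = G β α)
    (hXY : ∀ α β, X α β + X β α = Y α β + Y β α) :
    ∑ α, ∑ β, G α β * X α β = ∑ α, ∑ β, G α β * Y α β := by
  have symmetrize (W : ι → ι → ℝ) :
      ∑ α, ∑ β, G α β * (W α β + W β α) = 2 * ∑ α, ∑ β, G α β * W α β := by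
    have hswap : ∑ α, ∑ β, G α β * W β α = ∑ α, ∑ β, G α β * W α β := by
      rw [sum_comm]
      simp only [hG]
    simp only [mul_add, sum_add_distrib, hswap, two_mul]
  have hX := symmetrize X
  simp only [hXY, symmetrize Y] at hX
  linarith

theorem sum_comm_reverse (f : ι → κ → τ → ℝ) :
    ∑ x, ∑ y, ∑ z, f x y z = ∑ z, ∑ y, ∑ x, f x y z := by
  rw [sum_comm, sum_comm_cycle]

theorem sum_comm_pairs (f : ι → ι → κ → κ → ℝ) :
    ∑ x, ∑ y, ∑ i, ∑ j, f x y i j = ∑ i, ∑ j, ∑ x, ∑ y, f x y i j := by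
  rw [sum_comm_cycle]
  exact sum_congr rfl fun _ _ => sum_comm_cycle

end Sums

section PartialDerivative

variable {n : ℕ} {f g : (Fin n → ℝ) → ℝ} {x : Fin n → ℝ}

theorem pd_add (hf : DifferentiableAt ℝ f x) (hg : DifferentiableAt ℝ g x) (μ : Fin n) :
    pd μ (fun y => f y + g y) x = pd μ f x + pd μ g x := by
  simp [pd, fderiv_fun_add hf hg]

theorem pd_sub (hf : DifferentiableAt ℝ f x) (hg : DifferentiableAt ℝ g x) (μ : Fin n) :
    pd μ (fun y => f y - g y) x = pd μ f x - pd μ g x := by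
  simp [pd, fderiv_fun_sub hf hg]

theorem pd_mul (hf : DifferentiableAt ℝ f x) (hg : DifferentiableAt ℝ g x) (μ : Fin n) :
    pd μ (fun y => f y * g y) x = pd μ f x * g x + f x * pd μ g x := by
  simp only [pd, fderiv_fun_mul hf hg, add_apply, smul_apply, smul_eq_mul]
  ring

theorem pd_const_mul (c : ℝ) (hf : DifferentiableAt ℝ f x) (μ : Fin n) :
    pd μ (fun y => c * f y) x = c * pd μ f x := by
  simp [pd, fderiv_const_mul hf c]

theorem pd_sum {κ : Type*} [Fintype κ] {f : κ → (Fin n → ℝ) → ℝ}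
    (hf : ∀ i, DifferentiableAt ℝ (f i) x) (μ : Fin n) :
    pd μ (fun y => ∑ i, f i y) x = ∑ i, pd μ (f i) x := by
  simp [pd, fderiv_fun_sum fun i _ => hf i]

theorem differentiableOn_pd {U : Set (Fin n → ℝ)} (hU : IsOpen U) (hf : ContDiffOn ℝ 2 f U)
    (μ : Fin n) : DifferentiableOn ℝ (pd μ f) U :=
  ((hf.fderiv_of_isOpen hU (m := 1) (by norm_num)).clm_apply contDiffOn_const).differentiableOn
    one_ne_zero

end PartialDerivative

section Covariant

variable {n : ℕ}

/-- The covariant derivative `∇_α T_β` of a one-form `T` with respect to the connection `Γ`. -/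
def covDeriv (Γ : Fin n → Fin n → Fin n → (Fin n → ℝ) → ℝ) (T : Fin n → (Fin n → ℝ) → ℝ)
    (α β : Fin n) (x : Fin n → ℝ) : ℝ :=
  pd α (T β) x - ∑ ν, Γ ν α β x * T ν x

/-- The covariant divergence `∇_μ V^μ_β` of a tensor with one upper and one lower index. -/
def covDivergence (Γ : Fin n → Fin n → Fin n → (Fin n → ℝ) → ℝ)
    (V : Fin n → Fin n → (Fin n → ℝ) → ℝ) (β : Fin n) (x : Fin n → ℝ) : ℝ :=
  (∑ μ, pd μ (V μ β) x) + (∑ μ, ∑ ν, Γ μ μ ν x * V ν β x) - ∑ μ, ∑ ν, Γ ν μ β x * V μ ν x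

/-- The covariant divergence `∇_μ S^μ_{αβ}` of a tensor with one upper and two lower indices. -/
def covDivergence₂ (Γ S : Fin n → Fin n → Fin n → (Fin n → ℝ) → ℝ) (α β : Fin n)
    (x : Fin n → ℝ) : ℝ :=
  (∑ μ, pd μ (S μ α β) x) + (∑ μ, ∑ ν, Γ μ μ ν x * S ν α β x)
    - (∑ μ, ∑ ν, Γ ν μ α x * S μ ν β x) - ∑ μ, ∑ ν, Γ ν μ β x * S μ α ν x

/-- The Ricci tensor of the connection `Γ`, up to the sign and factor of the conventions of quantum
Riemannian geometry (the factor `1/2` is in `scalarCurvature`). -/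
def ricci (Γ : Fin n → Fin n → Fin n → (Fin n → ℝ) → ℝ) (α β : Fin n) (x : Fin n → ℝ) : ℝ :=
  -(∑ μ, pd μ (Γ μ α β) x) + (∑ μ, pd α (Γ μ μ β) x)
    + (∑ μ, ∑ ν, Γ μ α ν x * Γ ν μ β x) - ∑ μ, ∑ ν, Γ μ μ ν x * Γ ν α β x

/-- The Ricci scalar, in the conventions of quantum Riemannian geometry, of the connection `Γ` with
respect to the inverse metric `G`. -/
def scalarCurvature (G : Fin n → Fin n → (Fin n → ℝ) → ℝ)
    (Γ : Fin n → Fin n → Fin n → (Fin n → ℝ) → ℝ) (x : Fin n → ℝ) : ℝ :=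
  1 / 2 * ∑ α, ∑ β, G α β x * ricci Γ α β x

/-- The part of the Ricci tensor that is quadratic in the connection coefficients, at a point. -/
def ricciQuad {ι : Type*} [Fintype ι] (S : ι → ι → ι → ℝ) (α β : ι) : ℝ :=
  (∑ μ, ∑ ν, S μ α ν * S ν μ β) - ∑ μ, ∑ ν, S μ μ ν * S ν α β

variable {Γ Γ₀ S S' : Fin n → Fin n → Fin n → (Fin n → ℝ) → ℝ} {T T' : Fin n → (Fin n → ℝ) → ℝ}
  {V : Fin n → Fin n → (Fin n → ℝ) → ℝ} {x : Fin n → ℝ}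

theorem covDeriv_congr (hT : ∀ β, T β =ᶠ[nhds x] T' β) (α β : Fin n) :
    covDeriv Γ T α β x = covDeriv Γ T' α β x := by
  simp only [covDeriv, pd, (hT _).fderiv_eq, (hT _).eq_of_nhds]

theorem covDeriv_sub_covDeriv_swap (hΓ : ∀ σ μ ν, Γ σ μ ν x = Γ σ ν μ x) (α β : Fin n) :
    covDeriv Γ T α β x - covDeriv Γ T β α x = pd α (T β) x - pd β (T α) x := by
  simp only [covDeriv, hΓ _ β α]
  ring

theorem covDivergence₂_swap (α β : Fin n) :
    covDivergence₂ Γ (fun σ μ ν => S σ ν μ) α β x = covDivergence₂ Γ S β α x := by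
  simp only [covDivergence₂]
  ring

theorem covDivergence₂_add (hS : ∀ σ μ ν, DifferentiableAt ℝ (S σ μ ν) x)
    (hS' : ∀ σ μ ν, DifferentiableAt ℝ (S' σ μ ν) x) (α β : Fin n) :
    covDivergence₂ Γ (fun σ μ ν y => S σ μ ν y + S' σ μ ν y) α β x
      = covDivergence₂ Γ S α β x + covDivergence₂ Γ S' α β x := by
  simp only [covDivergence₂, pd_add (hS _ _ _) (hS' _ _ _), mul_add, sum_add_distrib]
  ring

theorem covDivergence₂_sum {κ : Type*} [Fintype κ]
    {S : κ → Fin n → Fin n → Fin n → (Fin n → ℝ) → ℝ}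
    (hS : ∀ i σ μ ν, DifferentiableAt ℝ (S i σ μ ν) x) (α β : Fin n) :
    covDivergence₂ Γ (fun σ μ ν y => ∑ i, S i σ μ ν y) α β x
      = ∑ i, covDivergence₂ Γ (S i) α β x := by
  simp only [covDivergence₂, pd_sum fun i => hS i _ _ _, mul_sum, sum_add_distrib,
    sum_sub_distrib, sum_comm_cycle (u := (univ : Finset κ))]
  rw [sum_comm]

theorem covDivergence₂_mul (hT : ∀ β, DifferentiableAt ℝ (T β) x)
    (hV : ∀ μ β, DifferentiableAt ℝ (V μ β) x) (α β : Fin n) :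
    covDivergence₂ Γ (fun σ μ ν y => T μ y * V σ ν y) α β x
      = (∑ μ, covDeriv Γ T μ α x * V μ β x) + T α x * covDivergence Γ V β x := by
  simp only [covDivergence₂, covDeriv, covDivergence, pd_mul (hT _) (hV _ _), sub_mul, mul_sub,
    mul_add, sum_mul, mul_sum, sum_add_distrib, sum_sub_distrib, mul_left_comm (T α x), mul_assoc]
  ring

/-- Palatini's identity. -/
theorem ricci_add_mul_covDeriv {c : ℝ} (hΓ : ∀ σ μ ν y, Γ σ μ ν y = Γ₀ σ μ ν y - c * S σ μ ν y)
    (hΓ_symm : ∀ σ μ ν, Γ σ μ ν x = Γ σ ν μ x)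
    (hΓ₀ : ∀ σ μ ν, DifferentiableAt ℝ (Γ₀ σ μ ν) x)
    (hS : ∀ σ μ ν, DifferentiableAt ℝ (S σ μ ν) x) (α β : Fin n) :
    ricci Γ α β x + c * covDeriv Γ (fun β y => ∑ μ, S μ μ β y) α β x
      = ricci Γ₀ α β x + c * covDivergence₂ Γ S α β x - c ^ 2 * ricciQuad (S · · · x) α β := by
  have hpd (ρ σ μ ν) : pd ρ (Γ₀ σ μ ν) x = pd ρ (Γ σ μ ν) x + c * pd ρ (S σ μ ν) x := by
    rw [funext (hΓ σ μ ν), pd_sub (hΓ₀ σ μ ν) ((hS σ μ ν).const_mul c), pd_const_mul c (hS σ μ ν)]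
    ring
  have hΓ₀_eq (σ μ ν) : Γ₀ σ μ ν x = Γ σ μ ν x + c * S σ μ ν x := by
    rw [hΓ]
    ring
  have hswap : ∑ μ, ∑ ν, Γ ν μ α x * S μ ν β x = ∑ μ, ∑ ν, Γ μ α ν x * S ν μ β x := by
    rw [sum_comm]
    simp only [hΓ_symm _ α]
  have hcomm : ∑ μ, ∑ ν, Γ ν μ β x * S μ α ν x = ∑ μ, ∑ ν, S μ α ν x * Γ ν μ β x := by
    simp only [mul_comm]
  have htrace : ∑ ν, Γ ν α β x * ∑ μ, S μ μ ν x = ∑ μ, ∑ ν, S μ μ ν x * Γ ν α β x := by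
    simp only [mul_sum]
    rw [sum_comm]
    simp only [mul_comm]
  simp only [ricci, covDeriv, covDivergence₂, ricciQuad, pd_sum fun μ => hS μ μ _, hpd, hΓ₀_eq,
    hswap, hcomm, htrace, add_mul, mul_add, sum_add_distrib, mul_assoc, mul_left_comm _ c,
    ← mul_sum]
  ring

end Covariant

section Algebra

variable {ι κ : Type*} {a : κ → ι → ℝ} {F : ι → ι → κ → ℝ} {G : ι → ι → ℝ} {f : κ → ι → ι → ℝ}

theorem sum_curvature_diag [Fintype ι] (hG : ∀ α β, G α β = G β α)
    (hf : ∀ i α β, f i α β = -f i β α)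
    (hF : ∀ μ β i, F μ β i = 1 / 2 * ∑ α, G α μ * f i α β) (i : κ) : ∑ μ, F μ μ i = 0 := by
  have h : ∑ μ, ∑ α, G α μ * f i α μ = ∑ μ, ∑ α, G α μ * 0 :=
    sum_sum_mul_eq_of_symm (G := fun μ α => G α μ) (X := fun μ α => f i α μ)
      (fun _ _ => hG _ _) fun α β => by rw [hf i β α]; ring
  simp only [hF, ← mul_sum, h, mul_zero, sum_const_zero]

variable [Fintype κ]

theorem curvature_swap {e : κ → κ → κ → ℝ} (he : ∀ i j k, e i j k = -e i k j) {c : ℝ}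
    {d : κ → ι → ι → ℝ}
    (hf : ∀ i α β, f i α β = d i α β - d i β α - c * ∑ j, ∑ k, e i j k * a j α * a k β)
    (i : κ) (α β : ι) : f i α β = -f i β α := by
  have hbracket : ∑ j, ∑ k, e i j k * a j α * a k β = -∑ j, ∑ k, e i j k * a j β * a k α := by
    rw [sum_comm]
    simp only [← sum_neg_distrib]
    refine sum_congr rfl fun j _ => sum_congr rfl fun k _ => ?_
    rw [he]
    ring
  rw [hf, hf, hbracket]
  ring

/-- The tensor `A_{iμ} F^σ_{νi} + A_{iν} F^σ_{μi}` at a point; up to the factor `-1/h`, it is the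
difference between the connection of the product and that of spacetime. -/
def connShift (a : κ → ι → ℝ) (F : ι → ι → κ → ℝ) (σ μ ν : ι) : ℝ :=
  ∑ i, (a i μ * F σ ν i + a i ν * F σ μ i)

theorem connShift_comm (σ μ ν : ι) : connShift a F σ μ ν = connShift a F σ ν μ :=
  sum_congr rfl fun _ _ => add_comm _ _

variable [Fintype ι]

/-- The commutator of the curvature endomorphisms `F_i` and `F_j` contracted with `A_i` and `A_j` at
a point: `A_{iβ} A_{jν} (F^μ_{αj} F^ν_{μi} - F^μ_{αi} F^ν_{μj})`. -/
def curvatureComm (a : κ → ι → ℝ) (F : ι → ι → κ → ℝ) (α β : ι) : ℝ :=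
  ∑ i, ∑ j, ∑ ν, a i β * a j ν * ((∑ μ, F μ α j * F ν μ i) - ∑ μ, F μ α i * F ν μ j)

/-- The trace form `tr (F_i F_j) = F^μ_{νi} F^ν_{μj}` of the curvature endomorphisms at a point. -/
def curvatureTrace (F : ι → ι → κ → ℝ) (i j : κ) : ℝ :=
  ∑ μ, ∑ ν, F μ ν i * F ν μ j

/-- The Yang-Mills density `F^i_{αβ} F^{iαβ}` at a point, with indices raised by `G`. -/
def curvatureSq (G : ι → ι → ℝ) (f : κ → ι → ι → ℝ) : ℝ :=
  ∑ i, ∑ α, ∑ β, ∑ μ, ∑ ν, f i α β * G α μ * G β ν * f i μ ν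

theorem sum_connShift_diag (hF : ∀ i, ∑ μ, F μ μ i = 0) (β : ι) :
    ∑ μ, connShift a F μ μ β = ∑ i, ∑ μ, a i μ * F μ β i := by
  unfold connShift
  rw [sum_comm]
  simp only [sum_add_distrib, ← mul_sum, hF, mul_zero, add_zero]

theorem sum_connShift_mul_connShift (α β : ι) :
    ∑ μ, ∑ ν, connShift a F μ α ν * connShift a F ν μ β
      = (∑ i, ∑ j, a i α * a j β * curvatureTrace F i j)
        + (∑ i, ∑ j, ∑ μ, ∑ ν, a j μ * a i ν * F μ α i * F ν β j)
        + (∑ i, ∑ j, ∑ ν, a i α * a j ν * ∑ μ, F μ β j * F ν μ i)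
        + ∑ i, ∑ j, ∑ ν, a i β * a j ν * ∑ μ, F μ α j * F ν μ i := by
  have hrelabel : ∑ i, ∑ j, ∑ ν, a i β * a j ν * ∑ μ, F μ α j * F ν μ i
      = ∑ i, ∑ j, ∑ ν, a j β * a i ν * ∑ μ, F μ α i * F ν μ j := sum_comm
  rw [hrelabel]
  simp only [connShift, sum_mul_sum]
  rw [sum_comm_pairs]
  simp only [← sum_add_distrib]
  refine sum_congr rfl fun i _ => sum_congr rfl fun j _ => ?_
  simp only [curvatureTrace, mul_sum, add_mul, mul_add, sum_add_distrib]
  rw [sum_comm (f := fun μ ν => a i ν * F μ α i * (a j β * F ν μ j))]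
  simp only [← sum_add_distrib]
  refine sum_congr rfl fun μ _ => sum_congr rfl fun ν _ => ?_
  ring

theorem sum_connShift_diag_mul_connShift (hF : ∀ i, ∑ μ, F μ μ i = 0) (α β : ι) :
    ∑ μ, ∑ ν, connShift a F μ μ ν * connShift a F ν α β
      = (∑ i, ∑ j, ∑ ν, a i α * a j ν * ∑ μ, F μ β i * F ν μ j)
        + ∑ i, ∑ j, ∑ ν, a i β * a j ν * ∑ μ, F μ α i * F ν μ j := by
  have hfactor (α β : ι) : ∑ i, ∑ j, ∑ ν, a i α * a j ν * ∑ μ, F μ β i * F ν μ j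
      = ∑ ν, (∑ i, a i α * F ν β i) * ∑ j, ∑ μ, a j μ * F μ ν j := by
    simp only [sum_mul_sum]
    simp only [mul_sum]
    rw [sum_comm (s := univ (α := ι))]
    refine sum_congr rfl fun i _ => ?_
    rw [sum_comm_cycle]
    refine sum_congr rfl fun ν _ => sum_congr rfl fun j _ => sum_congr rfl fun μ _ => ?_
    ring
  rw [sum_comm]
  simp only [← sum_mul, sum_connShift_diag hF, hfactor, ← sum_add_distrib, ← add_mul]
  exact sum_congr rfl fun _ _ => mul_comm _ _

theorem ricciQuad_connShift (hF : ∀ i, ∑ μ, F μ μ i = 0) (α β : ι) :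
    ricciQuad (connShift a F) α β
      = (∑ i, ∑ j, a i α * a j β * curvatureTrace F i j)
        + (∑ i, ∑ j, ∑ μ, ∑ ν, a j μ * a i ν * F μ α i * F ν β j)
        + (curvatureComm a F α β + curvatureComm a F β α) := by
  simp only [ricciQuad, curvatureComm, sum_connShift_mul_connShift,
    sum_connShift_diag_mul_connShift hF, mul_sub, sum_sub_distrib]
  ring

theorem sum_metric_mul [DecidableEq κ] (hG : ∀ α β, G α β = G β α) {c : ℝ} {H : κ → κ → ℝ}
    (hH : ∀ i j, H i j = c * (if i = j then 1 else 0) + c ^ 2 * ∑ μ, ∑ ν, G μ ν * a i ν * a j μ)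
    (T : κ → κ → ℝ) :
    ∑ i, ∑ j, H i j * T i j
      = c * (∑ i, T i i) + c ^ 2 * ∑ α, ∑ β, G α β * ∑ i, ∑ j, a i α * a j β * T i j := by
  have hcontract : ∑ i, ∑ j, (∑ μ, ∑ ν, G μ ν * a i ν * a j μ) * T i j
      = ∑ α, ∑ β, G α β * ∑ i, ∑ j, a i α * a j β * T i j := by
    simp only [sum_mul, mul_sum]
    rw [sum_comm_pairs, sum_comm]
    refine sum_congr rfl fun α _ => sum_congr rfl fun β _ => sum_congr rfl fun i _ =>
      sum_congr rfl fun j _ => ?_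
    rw [hG β α]
    ring
  simp only [hH, add_mul, sum_add_distrib, mul_assoc c, mul_assoc (c ^ 2), ← mul_sum, hcontract]
  simp

theorem trace_metric [DecidableEq κ] (hG : ∀ α β, G α β = G β α) {c : ℝ} {H : κ → κ → ℝ}
    (hH : ∀ i j, H i j = c * (if i = j then 1 else 0) + c ^ 2 * ∑ μ, ∑ ν, G μ ν * a i ν * a j μ) :
    ∑ i, H i i = c * Fintype.card κ + c ^ 2 * ∑ α, ∑ β, G α β * ∑ i, a i α * a i β := by
  simpa using sum_metric_mul hG hH fun i j => if i = j then 1 else 0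

theorem sum_curvatureTrace_diag (hG : ∀ α β, G α β = G β α) (hf : ∀ i α β, f i α β = -f i β α)
    (hF : ∀ μ β i, F μ β i = 1 / 2 * ∑ α, G α μ * f i α β) :
    ∑ i, curvatureTrace F i i = -(1 / 4) * curvatureSq G f := by
  rw [curvatureSq, mul_sum]
  refine sum_congr rfl fun i _ => ?_
  simp only [curvatureTrace, hF, mul_sum (a := (1 / 2 : ℝ)), sum_mul_sum]
  rw [sum_comm_pairs, mul_sum]
  refine sum_congr rfl fun α _ => ?_
  rw [sum_comm_reverse]
  simp only [mul_sum]
  refine sum_congr rfl fun β _ => sum_congr rfl fun μ _ => sum_congr rfl fun ν _ => ?_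
  rw [hf i ν μ, hG ν β]
  ring

theorem sum_metric_mul_curvature (hG : ∀ α β, G α β = G β α)
    (hF : ∀ μ β i, F μ β i = 1 / 2 * ∑ α, G α μ * f i α β) :
    ∑ α, ∑ β, G α β * ∑ i, ∑ μ, f i μ α * F μ β i = 1 / 2 * curvatureSq G f := by
  simp only [curvatureSq, hF, mul_sum]
  rw [sum_comm_cycle (u := univ (α := κ))]
  refine sum_congr rfl fun i _ => ?_
  rw [sum_comm_pairs]
  refine sum_congr rfl fun α _ => ?_
  rw [sum_comm]
  refine sum_congr rfl fun β _ => sum_congr rfl fun μ _ => sum_congr rfl fun ν _ => ?_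
  rw [hG α μ]
  ring

theorem sum_exterior_add_bracket {e : κ → κ → κ → ℝ} (he : ∀ i j k, e i j k = -e j i k) {c : ℝ}
    {d : κ → ι → ι → ℝ}
    (hf : ∀ i μ α, f i μ α = d i μ α - c * ∑ j, ∑ k, e i j k * a j μ * a k α) (α β : ι) :
    (∑ i, ∑ μ, d i μ α * F μ β i) + c * (∑ i, ∑ j, ∑ k, ∑ μ, a i μ * a k α * F μ β j * e i j k)
      = ∑ i, ∑ μ, f i μ α * F μ β i := by
  have hbracket : ∑ i, ∑ j, ∑ k, ∑ μ, a i μ * a k α * F μ β j * e i j k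
      = -∑ i, ∑ μ, (∑ j, ∑ k, e i j k * a j μ * a k α) * F μ β i := by
    simp only [sum_mul, ← sum_neg_distrib]
    rw [sum_comm]
    refine sum_congr rfl fun i _ => ?_
    rw [sum_comm_cycle]
    refine sum_congr rfl fun μ _ => sum_congr rfl fun j _ => sum_congr rfl fun k _ => ?_
    rw [he]
    ring
  simp only [hbracket, hf, sub_mul, mul_assoc c, sum_sub_distrib, ← mul_sum]
  ring

end Algebra

section Product

variable {n : ℕ} {κ : Type*} {U : Set (Fin n → ℝ)} {G : Fin n → Fin n → (Fin n → ℝ) → ℝ}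
  {A : κ → Fin n → (Fin n → ℝ) → ℝ} {F : Fin n → Fin n → κ → (Fin n → ℝ) → ℝ}
  {f : κ → Fin n → Fin n → (Fin n → ℝ) → ℝ} {Γ Γ₀ : Fin n → Fin n → Fin n → (Fin n → ℝ) → ℝ}
  {e : κ → κ → κ → ℝ} {h c : ℝ} {x : Fin n → ℝ}

theorem differentiableOn_raised (hG : ∀ α μ, DifferentiableOn ℝ (G α μ) U)
    (hf : ∀ i α β, DifferentiableOn ℝ (f i α β) U)
    (hF : ∀ μ β i x, F μ β i x = 1 / 2 * ∑ α, G α μ x * f i α β x) (μ β : Fin n) (i : κ) :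
    DifferentiableOn ℝ (F μ β i) U := by
  rw [funext (hF μ β i)]
  fun_prop

variable [Fintype κ]

/-- The spacetime block of the Ricci tensor of the product, i.e. the tensor contracted with
`g̃^{αβ}` in its Ricci scalar. The structure constants `e` play the role of `ε`, and `F μ β i` is
`F^μ_{βi}`. -/
def productRicci (e : κ → κ → κ → ℝ) (h : ℝ) (A : κ → Fin n → (Fin n → ℝ) → ℝ)
    (F : Fin n → Fin n → κ → (Fin n → ℝ) → ℝ) (Γ : Fin n → Fin n → Fin n → (Fin n → ℝ) → ℝ)
    (α β : Fin n) (x : Fin n → ℝ) : ℝ :=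
  ricci Γ α β x
    + 1 / h * covDeriv Γ (fun β y => ∑ i, ∑ μ, A i μ y * F μ β i y) α β x
    + 1 / h ^ 2 * (∑ i, ∑ j, ∑ μ, ∑ ν, A j μ x * A i ν x * F μ α i x * F ν β j x)
    - 2 / h * (∑ i, A i α x * covDivergence Γ (F · · i) β x)
    + 2 / h ^ 2 * curvatureComm (A · · x) (F · · · x) α β
    + 1 / h ^ 2 * (∑ i, ∑ j, ∑ k, ∑ μ, A i μ x * A k α x * F μ β j x * e i j k)
    - 1 / h * (∑ i, ∑ μ, (covDeriv Γ (A i) α μ x + covDeriv Γ (A i) μ α x) * F μ β i x)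
    + 1 / (2 * h ^ 2) * ∑ i, A i α x * A i β x

/-- The Ricci scalar of the product, for an inverse spacetime metric `G` and an inverse fibre metric
`H`. -/
def productScalarCurvature (e : κ → κ → κ → ℝ) (h : ℝ) (G : Fin n → Fin n → (Fin n → ℝ) → ℝ)
    (H : κ → κ → (Fin n → ℝ) → ℝ) (A : κ → Fin n → (Fin n → ℝ) → ℝ)
    (F : Fin n → Fin n → κ → (Fin n → ℝ) → ℝ) (Γ : Fin n → Fin n → Fin n → (Fin n → ℝ) → ℝ)
    (x : Fin n → ℝ) : ℝ :=
  -(1 / 4) * (∑ i, H i i x) + 1 / 2 * (∑ α, ∑ β, G α β x * productRicci e h A F Γ α β x)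
    + 1 / 2 * ∑ i, ∑ j, H i j x * curvatureTrace (F · · · x) i j

/-- A tensor with the same symmetric part as `productRicci`, written with the connection `Γ₀` of
spacetime and the Yang-Mills curvature `f`. -/
def reducedRicci (h : ℝ) (A : κ → Fin n → (Fin n → ℝ) → ℝ)
    (F : Fin n → Fin n → κ → (Fin n → ℝ) → ℝ) (f : κ → Fin n → Fin n → (Fin n → ℝ) → ℝ)
    (Γ₀ : Fin n → Fin n → Fin n → (Fin n → ℝ) → ℝ) (α β : Fin n) (x : Fin n → ℝ) : ℝ :=
  ricci Γ₀ α β x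
    + 1 / h * (∑ i, ∑ μ, f i μ α x * F μ β i x)
    - 1 / h ^ 2 * (∑ i, ∑ j, A i α x * A j β x * curvatureTrace (F · · · x) i j)
    + 1 / (2 * h ^ 2) * ∑ i, A i α x * A i β x

theorem differentiableOn_curvature (hU : IsOpen U) (hA : ∀ i μ, ContDiffOn ℝ 2 (A i μ) U)
    (hf : ∀ i α β x, f i α β x = pd α (A i β) x - pd β (A i α) x
      - c * ∑ j, ∑ k, e i j k * A j α x * A k β x) (i : κ) (α β : Fin n) :
    DifferentiableOn ℝ (f i α β) U := by
  rw [funext (hf i α β)]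
  have hpd (β α) : DifferentiableOn ℝ (pd α (A i β)) U := differentiableOn_pd hU (hA i β) α
  have hAd (j α) : DifferentiableOn ℝ (A j α) U := (hA j α).differentiableOn two_ne_zero
  fun_prop

theorem differentiableAt_connShift (hA : ∀ i μ, DifferentiableAt ℝ (A i μ) x)
    (hF : ∀ μ β i, DifferentiableAt ℝ (F μ β i) x) (σ μ ν : Fin n) :
    DifferentiableAt ℝ (fun y => connShift (A · · y) (F · · · y) σ μ ν) x := by
  unfold connShift
  fun_prop

theorem covDivergence₂_connShift (hA : ∀ i μ, DifferentiableAt ℝ (A i μ) x)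
    (hF : ∀ μ β i, DifferentiableAt ℝ (F μ β i) x) (α β : Fin n) :
    covDivergence₂ Γ (fun σ μ ν y => connShift (A · · y) (F · · · y) σ μ ν) α β x
      = (∑ i, ((∑ μ, covDeriv Γ (A i) μ α x * F μ β i x)
          + A i α x * covDivergence Γ (F · · i) β x))
        + ∑ i, ((∑ μ, covDeriv Γ (A i) μ β x * F μ α i x)
          + A i β x * covDivergence Γ (F · · i) α x) := by
  have hAF (i σ μ ν) : DifferentiableAt ℝ (fun y => A i μ y * F σ ν i y) x :=
    (hA i μ).fun_mul (hF σ ν i)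
  simp only [connShift]
  rw [covDivergence₂_sum fun i σ μ ν => (hAF i σ μ ν).fun_add (hAF i σ ν μ), ← sum_add_distrib]
  refine sum_congr rfl fun i _ => ?_
  rw [covDivergence₂_add (hAF i) fun σ μ ν => hAF i σ ν μ,
    covDivergence₂_swap (S := fun σ μ ν y => A i μ y * F σ ν i y),
    covDivergence₂_mul (hA i) (hF · · i), covDivergence₂_mul (hA i) (hF · · i)]

theorem productRicci_add_swap (hA : ∀ i μ, DifferentiableAt ℝ (A i μ) x)
    (hF : ∀ μ β i, DifferentiableAt ℝ (F μ β i) x)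
    (hF_trace : ∀ᶠ y in nhds x, ∀ i, ∑ μ, F μ μ i y = 0)
    (hΓ₀ : ∀ σ μ ν, DifferentiableAt ℝ (Γ₀ σ μ ν) x)
    (hΓ₀_symm : ∀ σ μ ν, Γ₀ σ μ ν x = Γ₀ σ ν μ x)
    (hΓ : ∀ σ μ ν y, Γ σ μ ν y = Γ₀ σ μ ν y - 1 / h * connShift (A · · y) (F · · · y) σ μ ν)
    (he : ∀ i j k, e i j k = -e j i k)
    (hf : ∀ i α β, f i α β x = pd α (A i β) x - pd β (A i α) x
      - 1 / h * ∑ j, ∑ k, e i j k * A j α x * A k β x) (α β : Fin n) :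
    productRicci e h A F Γ α β x + productRicci e h A F Γ β α x
      = reducedRicci h A F f Γ₀ α β x + reducedRicci h A F f Γ₀ β α x := by
  have hΓ_symm (σ μ ν) : Γ σ μ ν x = Γ σ ν μ x := by
    rw [hΓ, hΓ, hΓ₀_symm, connShift_comm]
  have hricci (α β) := ricci_add_mul_covDeriv hΓ hΓ_symm hΓ₀ (differentiableAt_connShift hA hF) α β
  have htrace (β : Fin n) : (fun y => ∑ μ, connShift (A · · y) (F · · · y) μ μ β)
      =ᶠ[nhds x] fun y => ∑ i, ∑ μ, A i μ y * F μ β i y :=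
    hF_trace.mono fun y hy => sum_connShift_diag hy β
  have hbracket (α β) := sum_exterior_add_bracket (F := (F · · · x)) he hf α β
  simp only [covDeriv_congr htrace, covDivergence₂_connShift hA hF,
    ricciQuad_connShift (a := (A · · x)) (F := (F · · · x)) hF_trace.self_of_nhds,
    sum_add_distrib] at hricci
  simp only [← covDeriv_sub_covDeriv_swap hΓ_symm, sub_mul, sum_sub_distrib] at hbracket
  simp only [productRicci, reducedRicci, add_mul, sum_add_distrib]
  linear_combination hricci α β + hricci β α + 1 / h * (hbracket α β + hbracket β α)

theorem sum_mul_reducedRicci (hG : ∀ α β, G α β x = G β α x)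
    (hF : ∀ μ β i, F μ β i x = 1 / 2 * ∑ α, G α μ x * f i α β x) :
    ∑ α, ∑ β, G α β x * reducedRicci h A F f Γ₀ α β x
      = (∑ α, ∑ β, G α β x * ricci Γ₀ α β x)
        + 1 / h * (1 / 2 * curvatureSq (G · · x) (f · · · x))
        - 1 / h ^ 2 * (∑ α, ∑ β, G α β x *
          ∑ i, ∑ j, A i α x * A j β x * curvatureTrace (F · · · x) i j)
        + 1 / (2 * h ^ 2) * ∑ α, ∑ β, G α β x * ∑ i, A i α x * A i β x := by
  rw [← sum_metric_mul_curvature hG hF]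
  simp only [reducedRicci, mul_add, mul_sub, mul_left_comm (G _ _ x) (1 / h),
    mul_left_comm (G _ _ x) (1 / h ^ 2), mul_left_comm (G _ _ x) (1 / (2 * h ^ 2)),
    sum_add_distrib, sum_sub_distrib, ← mul_sum (a := 1 / h), ← mul_sum (a := 1 / h ^ 2),
    ← mul_sum (a := 1 / (2 * h ^ 2))]

end Product

section Metric

variable {n : ℕ}

/-- The Christoffel symbols `Γ^σ_{μν}` of the metric `g` with inverse `ginv`. -/
def christoffel (g ginv : Fin n → Fin n → (Fin n → ℝ) → ℝ) (σ μ ν : Fin n) (x : Fin n → ℝ) : ℝ :=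
  1 / 2 * ∑ ρ, ginv σ ρ x * (pd μ (g ν ρ) x + pd ν (g μ ρ) x - pd ρ (g μ ν) x)

variable {g ginv : Fin n → Fin n → (Fin n → ℝ) → ℝ}

theorem christoffel_comm (hg : ∀ μ ν x, g μ ν x = g ν μ x) (σ μ ν : Fin n) (x : Fin n → ℝ) :
    christoffel g ginv σ μ ν x = christoffel g ginv σ ν μ x := by
  simp only [christoffel, funext (hg μ ν), add_comm (pd μ _ x)]

theorem differentiableOn_christoffel {U : Set (Fin n → ℝ)} (hU : IsOpen U)
    (hg : ∀ μ ν, ContDiffOn ℝ 2 (g μ ν) U) (hginv : ∀ μ ν, DifferentiableOn ℝ (ginv μ ν) U)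
    (σ μ ν : Fin n) : DifferentiableOn ℝ (christoffel g ginv σ μ ν) U := by
  have hpd (μ ν ρ) : DifferentiableOn ℝ (pd ρ (g μ ν)) U := differentiableOn_pd hU (hg μ ν) ρ
  unfold christoffel
  fun_prop

end Metric

theorem inverse_symm {ι R : Type*} [Fintype ι] [DecidableEq ι] [CommRing R] {g ginv : ι → ι → R}
    (hg : ∀ μ ν, g μ ν = g ν μ)
    (hinv : ∀ μ ν, ∑ ρ, g μ ρ * ginv ρ ν = if μ = ν then 1 else 0) (μ ν : ι) :
    ginv μ ν = ginv ν μ := by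
  have hmul : Matrix.of g * Matrix.of ginv = 1 := by
    ext μ ν
    simp [Matrix.mul_apply, Matrix.one_apply, hinv]
  have hsymm : (Matrix.of g).IsSymm := Matrix.IsSymm.ext fun μ ν => hg ν μ
  have hsymm_inv := hsymm.inv
  rw [Matrix.inv_eq_right_inv hmul] at hsymm_inv
  exact hsymm_inv.apply ν μ

theorem eps_swap_left (i j k : Fin 3) : eps i j k = -eps j i k := by
  fin_cases i <;> fin_cases j <;> fin_cases k <;> simp [eps]

theorem eps_swap_right (i j k : Fin 3) : eps i j k = -eps i k j := by
  fin_cases i <;> fin_cases j <;> fin_cases k <;> simp [eps]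

theorem stmt17_general {n : ℕ} {κ : Type*} [Fintype κ] [DecidableEq κ] {U : Set (Fin n → ℝ)}
    (hU : IsOpen U) {G : Fin n → Fin n → (Fin n → ℝ) → ℝ} {A : κ → Fin n → (Fin n → ℝ) → ℝ}
    {Γ₀ : Fin n → Fin n → Fin n → (Fin n → ℝ) → ℝ} {e : κ → κ → κ → ℝ} {h : ℝ} (hh : h ≠ 0)
    (hG_symm : ∀ x ∈ U, ∀ μ ν, G μ ν x = G ν μ x) (hG : ∀ μ ν, DifferentiableOn ℝ (G μ ν) U)
    (hA : ∀ i μ, ContDiffOn ℝ 2 (A i μ) U)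
    (hΓ₀_symm : ∀ x ∈ U, ∀ σ μ ν, Γ₀ σ μ ν x = Γ₀ σ ν μ x)
    (hΓ₀ : ∀ σ μ ν, DifferentiableOn ℝ (Γ₀ σ μ ν) U)
    (he_left : ∀ i j k, e i j k = -e j i k) (he_right : ∀ i j k, e i j k = -e i k j)
    {f : κ → Fin n → Fin n → (Fin n → ℝ) → ℝ}
    (hf : ∀ i α β x, f i α β x = pd α (A i β) x - pd β (A i α) x
      - 1 / h * ∑ j, ∑ k, e i j k * A j α x * A k β x)
    {F : Fin n → Fin n → κ → (Fin n → ℝ) → ℝ}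
    (hF : ∀ μ β i x, F μ β i x = 1 / 2 * ∑ α, G α μ x * f i α β x)
    {Γ : Fin n → Fin n → Fin n → (Fin n → ℝ) → ℝ}
    (hΓ : ∀ σ μ ν x, Γ σ μ ν x = Γ₀ σ μ ν x - 1 / h * connShift (A · · x) (F · · · x) σ μ ν)
    {H : κ → κ → (Fin n → ℝ) → ℝ}
    (hH : ∀ i j x, H i j x = 1 / h * (if i = j then 1 else 0)
      + 1 / h ^ 2 * ∑ μ, ∑ ν, G μ ν x * A i ν x * A j μ x) {x : Fin n → ℝ} (hx : x ∈ U) :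
    productScalarCurvature e h G H A F Γ x = scalarCurvature G Γ₀ x - Fintype.card κ / (4 * h)
      + 1 / (8 * h) * curvatureSq (G · · x) (f · · · x) := by
  have hUx := hU.mem_nhds hx
  have hf_swap (y) := curvature_swap he_right (a := (A · · y)) (hf · · · y)
  have hFd := differentiableOn_raised hG (differentiableOn_curvature hU hA hf) hF
  have hF_trace : ∀ᶠ y in nhds x, ∀ i, ∑ μ, F μ μ i y = 0 := by
    filter_upwards [hUx] with y hy
    exact sum_curvature_diag (hG_symm y hy) (hf_swap y) (hF · · · y)
  have hricci := productRicci_add_swap (h := h) (e := e)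
    (fun i μ => ((hA i μ).differentiableOn two_ne_zero).differentiableAt hUx)
    (fun μ β i => (hFd μ β i).differentiableAt hUx) hF_trace
    (fun σ μ ν => (hΓ₀ σ μ ν).differentiableAt hUx) (hΓ₀_symm x hx) hΓ he_left (hf · · · x)
  have hGx := hG_symm x hx
  have hHx (i j) : H i j x = 1 / h * (if i = j then 1 else 0)
      + (1 / h) ^ 2 * ∑ μ, ∑ ν, G μ ν x * A i ν x * A j μ x := by rw [hH, one_div_pow]
  rw [productScalarCurvature, scalarCurvature, sum_sum_mul_eq_of_symm hGx hricci,
    sum_mul_reducedRicci hGx (hF · · · x), trace_metric (a := (A · · x)) hGx hHx,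
    sum_metric_mul (a := (A · · x)) hGx hHx, sum_curvatureTrace_diag hGx (hf_swap x) (hF · · · x)]
  field_simp
  ring

/-- The Ricci scalar (QRG conventions) of the product of spacetime and a constant round
fuzzy sphere of metric `h δ_{ij}` equals `R̃_M − 3/(4h) + (1/(8h)) F^i_{αβ} F^{iαβ}`. -/
theorem stmt17 (n : ℕ) (hn : 1 ≤ n)
    (U : Set (Fin n → ℝ)) (hU : IsOpen U)
    (gt gtinv : Fin n → Fin n → (Fin n → ℝ) → ℝ)
    (A : Fin 3 → Fin n → (Fin n → ℝ) → ℝ)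
    (h0 : ℝ) (hh0 : 0 < h0)
    (hgt_smooth : ∀ μ ν, ContDiffOn ℝ (⊤ : ℕ∞) (gt μ ν) U)
    (hgtinv_smooth : ∀ μ ν, ContDiffOn ℝ (⊤ : ℕ∞) (gtinv μ ν) U)
    (hA_smooth : ∀ i μ, ContDiffOn ℝ (⊤ : ℕ∞) (A i μ) U)
    (hgt_symm : ∀ μ ν x, gt μ ν x = gt ν μ x)
    (hgt_inv : ∀ x ∈ U, ∀ μ ν, ∑ ρ, gt μ ρ x * gtinv ρ ν x = if μ = ν then 1 else 0)
    (hgt_inv' : ∀ x ∈ U, ∀ μ ν, ∑ ρ, gtinv μ ρ x * gt ρ ν x = if μ = ν then 1 else 0)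
    -- Γ̃, F, Γ, h̃
    (Γt : Fin n → Fin n → Fin n → (Fin n → ℝ) → ℝ)
    (hΓt : ∀ σ μ ν x, Γt σ μ ν x = (1/2) * ∑ ρ, gtinv σ ρ x *
        (pd μ (gt ν ρ) x + pd ν (gt μ ρ) x - pd ρ (gt μ ν) x))
    (F : Fin n → Fin n → Fin 3 → (Fin n → ℝ) → ℝ)
    (hF : ∀ μ' β i x, F μ' β i x = (1/2) * ∑ α, gtinv α μ' x *
        (pd α (A i β) x - pd β (A i α) x - (1/h0) * ∑ j, ∑ k, eps i j k * A j α x * A k β x))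
    (Γ : Fin n → Fin n → Fin n → (Fin n → ℝ) → ℝ)
    (hΓ : ∀ σ μ ν x, Γ σ μ ν x = Γt σ μ ν x
        - (1/h0) * ∑ i, (A i μ x * F σ ν i x + A i ν x * F σ μ i x))
    (ht : Fin 3 → Fin 3 → (Fin n → ℝ) → ℝ)
    (hht : ∀ i j x, ht i j x = (1/h0) * (if i = j then 1 else 0)
        + (1/h0^2) * ∑ μ, ∑ ν, gtinv μ ν x * A i ν x * A j μ x)
    -- the Ricci scalar on the product
    (R : (Fin n → ℝ) → ℝ)
    (hR : ∀ x, R x = -(1/4) * (∑ i, ht i i x)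
      + (1/2) * ∑ α, ∑ β, gtinv α β x *
        ( -(∑ μ, pd μ (Γ μ α β) x) + (∑ μ, pd α (Γ μ μ β) x)
          + (∑ μ, ∑ ν, Γ μ α ν x * Γ ν μ β x) - (∑ μ, ∑ ν, Γ μ μ ν x * Γ ν α β x)
          + (1/h0) * (pd α (fun y => ∑ i, ∑ μ, A i μ y * F μ β i y) x
              - ∑ ν, Γ ν α β x * ∑ i, ∑ μ, A i μ x * F μ ν i x)
          + (1/h0^2) * (∑ i, ∑ j, ∑ μ, ∑ ν, A j μ x * A i ν x * F μ α i x * F ν β j x)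
          - (2/h0) * (∑ i, A i α x *
              ((∑ μ, pd μ (F μ β i) x) + (∑ μ, ∑ ν, Γ μ μ ν x * F ν β i x)
                - ∑ μ, ∑ ν, Γ ν μ β x * F μ ν i x))
          + (2/h0^2) * (∑ i, ∑ j, ∑ ν, A i β x * A j ν x *
              ((∑ μ, F μ α j x * F ν μ i x) - ∑ μ, F μ α i x * F ν μ j x))
          + (1/h0^2) * (∑ i, ∑ j, ∑ k, ∑ μ, A i μ x * A k α x * F μ β j x * eps i j k)
          - (1/h0) * (∑ i, ∑ μ,
              ((pd α (A i μ) x - ∑ ν, Γ ν α μ x * A i ν x)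
                + (pd μ (A i α) x - ∑ ν, Γ ν μ α x * A i ν x)) * F μ β i x)
          + (1/(2*h0^2)) * ∑ i, A i α x * A i β x )
      + (1/2) * ∑ i, ∑ j, ht i j x * ∑ μ, ∑ ν, F μ ν i x * F ν μ j x)
    -- the spacetime Ricci scalar and Yang-Mills curvature
    (RtM : (Fin n → ℝ) → ℝ)
    (hRtM : ∀ x, RtM x = (1/2) * ∑ α, ∑ β, gtinv α β x *
        ( -(∑ μ, pd μ (Γt μ α β) x) + (∑ μ, pd α (Γt μ μ β) x)
          + (∑ μ, ∑ ν, Γt μ α ν x * Γt ν μ β x) - ∑ μ, ∑ ν, Γt μ μ ν x * Γt ν α β x))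
    (Fg : Fin 3 → Fin n → Fin n → (Fin n → ℝ) → ℝ)
    (hFg : ∀ i α β x, Fg i α β x = pd α (A i β) x - pd β (A i α) x
        - (1/h0) * ∑ j, ∑ k, eps i j k * A j α x * A k β x) :
    ∀ x ∈ U, R x = RtM x - 3/(4*h0)
      + (1/(8*h0)) * ∑ i, ∑ α, ∑ β, ∑ μ, ∑ ν,
          Fg i α β x * gtinv α μ x * gtinv β ν x * Fg i μ ν x := by
  intro x hx
  obtain rfl : Γt = christoffel gt gtinv := by
    funext σ μ ν y
    exact hΓt σ μ ν y
  have hgtinv_diff (μ ν) : DifferentiableOn ℝ (gtinv μ ν) U :=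
    (hgtinv_smooth μ ν).differentiableOn (by simp)
  rw [hR, hRtM]
  exact stmt17_general hU hh0.ne'
    (fun y hy => inverse_symm (hgt_symm · · y) (hgt_inv y hy)) hgtinv_diff
    (fun i μ => contDiffOn_infty.1 (hA_smooth i μ) 2)
    (fun y _ σ μ ν => christoffel_comm hgt_symm σ μ ν y)
    (differentiableOn_christoffel hU (fun μ ν => contDiffOn_infty.1 (hgt_smooth μ ν) 2) hgtinv_diff)
    eps_swap_left eps_swap_right hFg (fun μ β i y => by simp only [hF, hFg]) hΓ hht hx
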